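/- Let 0 < d < 2 and set α* = arcsin(d/2). Define L(d,σ,δ) = 2π − 4·arcsin(d_L(d,σ,δ)/4) + 2δ, R(d,σ,δ) = 4π − 4·arcsin(d_R(d,σ,δ)/4) − 2δ and C(d,σ,δ) = min(L(d,σ,δ), R(d,σ,δ)). Then for every point (σ,δ) in the open rectangle (0,π) × (α*, π−α*) with (σ,δ) ≠ (π/2, π/2), the function (σ,δ) ↦ C(d,σ,δ) does not have a local extremum at (σ,δ). -/

import Mathlib

open Real

/-- Distance between the centers of the two left disks, in `(σ, δ)` coordinates. -/
noncomputable def dL (d σ δ : ℝ) : ℝ :=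
  Real.sqrt (d ^ 2 - 4 * d * Real.sin δ * Real.cos σ + 4 * Real.sin δ ^ 2)

/-- Distance between the centers of the two right disks, in `(σ, δ)` coordinates. -/
noncomputable def dR (d σ δ : ℝ) : ℝ :=
  Real.sqrt (d ^ 2 + 4 * d * Real.sin δ * Real.cos σ + 4 * Real.sin δ ^ 2)

/-- Length of the LRL-type bounded-curvature path. -/
noncomputable def Lfun (d σ δ : ℝ) : ℝ :=
  2 * π - 4 * Real.arcsin (dL d σ δ / 4) + 2 * δ

/-- Length of the RLR-type bounded-curvature path. -/
noncomputable def Rfun (d σ δ : ℝ) : ℝ :=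
  4 * π - 4 * Real.arcsin (dR d σ δ / 4) - 2 * δ

/-- Minimum of the LRL- and RLR-path lengths. -/
noncomputable def Cfun (d σ δ : ℝ) : ℝ :=
  min (Lfun d σ δ) (Rfun d σ δ)

/-- The supremum of `Cfun` over the rectangle `Ξ(d) = [0, π] × [α*, π - α*]`,
where `α* = arcsin (d/2)`. -/
noncomputable def Afun (d : ℝ) : ℝ :=
  sSup ((fun p : ℝ × ℝ => Cfun d p.1 p.2) ''
    (Set.Icc 0 π ×ˢ Set.Icc (Real.arcsin (d / 2)) (π - Real.arcsin (d / 2))))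

open Filter Topology in
lemma aux_pos {f : ℝ → ℝ} {f' : ℝ} (h : HasDerivAt f f' 0) (hf : 0 < f') :
    ∀ᶠ t in 𝓝[>] (0:ℝ), f 0 < f t := by
  have h1 := hasDerivAt_iff_tendsto_slope.1 h
  have h2 : ∀ᶠ t in 𝓝[≠] (0:ℝ), 0 < slope f 0 t := h1.eventually (lt_mem_nhds hf)
  have h3 : ∀ᶠ t in 𝓝[>] (0:ℝ), 0 < slope f 0 t :=
    h2.filter_mono (nhdsWithin_mono _ (fun t ht => ne_of_gt ht))
  filter_upwards [h3, self_mem_nhdsWithin] with t ht ht0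
  have ht0' : (0:ℝ) < t := ht0
  rw [slope_def_field, sub_zero] at ht
  have := (div_pos_iff_of_pos_right ht0').1 ht
  linarith

lemma aux_q (d s x : ℝ) (hd0 : 0 < d) (hd2 : d < 2) (hs : 0 < s) (hs1 : s ≤ 1)
    (hx : -1 < x) (hx1 : x < 1) :
    0 < d ^ 2 - 4 * d * s * x + 4 * s ^ 2 ∧ d ^ 2 - 4 * d * s * x + 4 * s ^ 2 < 16 := by
  have hds : 0 < d * s := mul_pos hd0 hs
  constructor
  · nlinarith [mul_pos hds (sub_pos.2 hx1), sq_nonneg (d - 2 * s)]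
  · nlinarith [mul_pos hds (sub_pos.2 hx), sq_nonneg (d - 2 * s)]

lemma aux_arc (q : ℝ) (h0 : 0 < q) (h1 : q < 16) :
    0 < arcsin (√q / 4) ∧ arcsin (√q / 4) < π / 2 ∧ sin (arcsin (√q / 4)) = √q / 4 ∧
    0 < sin (arcsin (√q / 4)) ∧ 0 < cos (arcsin (√q / 4)) ∧ √q / 4 < 1 := by
  have hp : 0 < √q := Real.sqrt_pos.2 h0
  have h4 : √q < 4 := by
    rw [Real.sqrt_lt' (by norm_num)]; linarith
  have ha : 0 < arcsin (√q / 4) := Real.arcsin_pos.2 (by positivity)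
  have hb : arcsin (√q / 4) < π / 2 := Real.arcsin_lt_pi_div_two.2 (by linarith)
  have hs : sin (arcsin (√q / 4)) = √q / 4 := Real.sin_arcsin (by linarith) (by linarith)
  refine ⟨ha, hb, hs, ?_, ?_, by linarith⟩
  · rw [hs]; positivity
  · exact Real.cos_pos_of_mem_Ioo ⟨by linarith, hb⟩

lemma aux_deriv (f : ℝ → ℝ) (f' : ℝ) (hf : HasDerivAt f f' 0) (h0 : 0 < f 0) (h1 : f 0 < 16) :
    HasDerivAt (fun t => 4 * arcsin (√(f t) / 4))
      (f' / (8 * (sin (arcsin (√(f 0) / 4)) * cos (arcsin (√(f 0) / 4))))) 0 := by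
  obtain ⟨ha, hb, hs, hsp, hcp, hlt⟩ := aux_arc (f 0) h0 h1
  have hp : 0 < √(f 0) := Real.sqrt_pos.2 h0
  have e1 := (hf.sqrt h0.ne').div_const 4
  have e2 := (Real.hasDerivAt_arcsin (x := √(f 0) / 4) (by linarith) (by linarith)).comp (0:ℝ) e1
  have e3 := e2.const_mul 4
  refine e3.congr_deriv ?_
  rw [← Real.cos_arcsin, hs]
  field_simp
  ring

lemma aux_dir (d σ δ e v w : ℝ) :
    HasDerivAt (fun t : ℝ => d ^ 2 + e * (4 * d * sin (δ + t * w) * cos (σ + t * v))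
        + 4 * sin (δ + t * w) ^ 2)
      (- e * (4 * d * sin δ * sin σ) * v + (e * (4 * d * cos δ * cos σ) + 8 * sin δ * cos δ) * w) 0 := by
  have h1 : HasDerivAt (fun t : ℝ => δ + t * w) w 0 := by
    simpa using ((hasDerivAt_id (0:ℝ)).mul_const w).const_add δ
  have h2 : HasDerivAt (fun t : ℝ => σ + t * v) v 0 := by
    simpa using ((hasDerivAt_id (0:ℝ)).mul_const v).const_add σ
  have h3 := h1.sin
  have h4 := h2.cos
  have h5 := ((((h3.const_mul (4 * d)).mul h4).const_mul e).const_add (d ^ 2)).add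
    ((h3.pow 2).const_mul 4)
  refine h5.congr_deriv ?_
  simp
  ring

open Filter Topology in
theorem C_no_local_extremum (d : ℝ) (hd0 : 0 < d) (hd2 : d < 2)
    (σ δ : ℝ) (hσ : σ ∈ Set.Ioo (0:ℝ) π)
    (hδ : δ ∈ Set.Ioo (Real.arcsin (d / 2)) (π - Real.arcsin (d / 2)))
    (hne : (σ, δ) ≠ (π / 2, π / 2)) :
    ¬ IsLocalMax (fun p : ℝ × ℝ => Cfun d p.1 p.2) (σ, δ) ∧
    ¬ IsLocalMin (fun p : ℝ × ℝ => Cfun d p.1 p.2) (σ, δ) := by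
  have hα : 0 < arcsin (d / 2) := Real.arcsin_pos.2 (by positivity)
  have hs : 0 < sin δ := Real.sin_pos_of_pos_of_lt_pi (by linarith [hδ.1]) (by linarith [hδ.2])
  have hsσ : 0 < sin σ := Real.sin_pos_of_pos_of_lt_pi hσ.1 hσ.2
  have hs1 := Real.sin_le_one δ
  have hx : cos σ ^ 2 < 1 := by nlinarith [Real.sin_sq_add_cos_sq σ]
  obtain ⟨hx0, hx1⟩ := abs_lt.1 ((sq_lt_one_iff_abs_lt_one _).1 hx)
  obtain ⟨qL0, qL1⟩ := aux_q d (sin δ) (cos σ) hd0 hd2 hs hs1 hx0 hx1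
  obtain ⟨qR0, qR1⟩ := aux_q d (sin δ) (-cos σ) hd0 hd2 hs hs1 (by linarith) (by linarith)
  have eR : d ^ 2 - 4 * d * sin δ * -cos σ + 4 * sin δ ^ 2
    = d ^ 2 + 4 * d * sin δ * cos σ + 4 * sin δ ^ 2 := by ring
  rw [eR] at qR0 qR1
  obtain ⟨ha, ha2, hsa, hsap, hcap, -⟩ := aux_arc _ qL0 qL1
  obtain ⟨hb, hb2, hsb, hsbp, hcbp, -⟩ := aux_arc _ qR0 qR1
  have hLa : Lfun d σ δ = 2 * π - 4 * arcsin (√(d ^ 2 - 4 * d * sin δ * cos σ + 4 * sin δ ^ 2) / 4) + 2 * δ := rfl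
  have hRb : Rfun d σ δ = 4 * π - 4 * arcsin (√(d ^ 2 + 4 * d * sin δ * cos σ + 4 * sin δ ^ 2) / 4) - 2 * δ := rfl
  have dLf : ∀ v w : ℝ, HasDerivAt (fun t : ℝ => Lfun d (σ + t * v) (δ + t * w))
      (-((4 * d * sin δ * sin σ) * v + (-(4 * d * cos δ * cos σ) + 8 * sin δ * cos δ) * w) /
        (8 * (sin (arcsin (√(d ^ 2 - 4 * d * sin δ * cos σ + 4 * sin δ ^ 2) / 4)) *
          cos (arcsin (√(d ^ 2 - 4 * d * sin δ * cos σ + 4 * sin δ ^ 2) / 4)))) + 2 * w) 0 := by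
    intro v w
    have h1 : HasDerivAt (fun t : ℝ => δ + t * w) w 0 := by
      simpa using ((hasDerivAt_id (0:ℝ)).mul_const w).const_add δ
    have hf : HasDerivAt (fun t : ℝ => d ^ 2 - 4 * d * sin (δ + t * w) * cos (σ + t * v)
        + 4 * sin (δ + t * w) ^ 2) _ 0 :=
      (aux_dir d σ δ (-1) v w).congr_of_eventuallyEq (Eventually.of_forall fun t => by ring)
    have := ((aux_deriv _ _ hf (by simpa using qL0) (by simpa using qL1)).const_sub (2 * π)).add
      (h1.const_mul 2)
    refine this.congr_deriv ?_
    simp only [zero_mul, add_zero]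
    ring
  have dRf : ∀ v w : ℝ, HasDerivAt (fun t : ℝ => Rfun d (σ + t * v) (δ + t * w))
      (-(-(4 * d * sin δ * sin σ) * v + ((4 * d * cos δ * cos σ) + 8 * sin δ * cos δ) * w) /
        (8 * (sin (arcsin (√(d ^ 2 + 4 * d * sin δ * cos σ + 4 * sin δ ^ 2) / 4)) *
          cos (arcsin (√(d ^ 2 + 4 * d * sin δ * cos σ + 4 * sin δ ^ 2) / 4)))) - 2 * w) 0 := by
    intro v w
    have h1 : HasDerivAt (fun t : ℝ => δ + t * w) w 0 := by
      simpa using ((hasDerivAt_id (0:ℝ)).mul_const w).const_add δ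
    have hf : HasDerivAt (fun t : ℝ => d ^ 2 + 4 * d * sin (δ + t * w) * cos (σ + t * v)
        + 4 * sin (δ + t * w) ^ 2) _ 0 :=
      (aux_dir d σ δ 1 v w).congr_of_eventuallyEq (Eventually.of_forall fun t => by ring)
    have := ((aux_deriv _ _ hf (by simpa using qR0) (by simpa using qR1)).const_sub (4 * π)).sub
      (h1.const_mul 2)
    refine this.congr_deriv ?_
    simp only [zero_mul, add_zero]
    ring
  have heq : arcsin (√(d ^ 2 - 4 * d * sin δ * cos σ + 4 * sin δ ^ 2) / 4) =
      arcsin (√(d ^ 2 + 4 * d * sin δ * cos σ + 4 * sin δ ^ 2) / 4) → cos σ = 0 := by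
    intro h
    have h2 : √(d ^ 2 - 4 * d * sin δ * cos σ + 4 * sin δ ^ 2) =
      √(d ^ 2 + 4 * d * sin δ * cos σ + 4 * sin δ ^ 2) := by
      have := congrArg sin h
      rw [hsa, hsb] at this; linarith
    have h3 := (Real.sqrt_inj qL0.le qR0.le).1 h2
    have h4 : (d * sin δ) * cos σ = 0 := by linarith
    exact (mul_eq_zero.1 h4).resolve_left (by positivity)
  clear hsa hsb
  generalize arcsin (√(d ^ 2 - 4 * d * sin δ * cos σ + 4 * sin δ ^ 2) / 4) = a at *
  generalize arcsin (√(d ^ 2 + 4 * d * sin δ * cos σ + 4 * sin δ ^ 2) / 4) = b at *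
  have hk : 0 < 4 * d * sin δ * sin σ := by positivity
  have hA : 0 < 8 * (sin a * cos a) := by positivity
  have hB : 0 < 8 * (sin b * cos b) := by positivity
  have hE : Lfun d σ δ = Rfun d σ δ →
      2 * (8 * (sin a * cos a)) - 2 * (8 * (sin b * cos b)) - 16 * sin δ * cos δ ≠ 0 := by
    intro h h0
    rw [hLa, hRb] at h
    have hδ' : δ = π / 2 - (b - a) := by linarith
    rw [hδ', Real.sin_pi_div_two_sub, Real.cos_pi_div_two_sub, Real.cos_sub, Real.sin_sub] at h0
    have h1 : sin (a - b) * (2 * cos a * cos b) = 0 := by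
      rw [Real.sin_sub]
      have e1 := Real.sin_sq_add_cos_sq a
      have e2 := Real.sin_sq_add_cos_sq b
      linear_combination h0 / 16 + (-sin b * cos b) * e1 + sin a * cos a * e2
    have h2 : sin (a - b) = 0 := (mul_eq_zero.1 h1).resolve_right (by positivity)
    have h3 : a = b := by
      have := (Real.sin_eq_zero_iff_of_lt_of_lt (by linarith) (by linarith)).1 h2
      linarith
    have h4 := heq h3
    apply hne
    have h5 : σ = π / 2 := Real.injOn_cos ⟨hσ.1.le, hσ.2.le⟩ ⟨by linarith [Real.pi_pos], by linarith [Real.pi_pos]⟩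
      (by rw [h4, Real.cos_pi_div_two])
    rw [h5, hδ', h3]; simp
  have path : ∀ v w : ℝ, Tendsto (fun t : ℝ => (σ + t * v, δ + t * w)) (𝓝[>] 0) (𝓝 (σ, δ)) := by
    intro v w
    have : Continuous (fun t : ℝ => (σ + t * v, δ + t * w)) := by fun_prop
    have h := this.tendsto 0
    simp only [zero_mul, add_zero] at h
    exact h.mono_left nhdsWithin_le_nhds
  constructor
  · intro hmax
    have key : ∀ v w : ℝ, ¬ ∀ᶠ t in 𝓝[>] (0:ℝ), Cfun d σ δ < Cfun d (σ + t * v) (δ + t * w) := by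
      intro v w h
      obtain ⟨t, h1, h2⟩ := (h.and ((path v w).eventually hmax)).exists
      exact absurd h1 (not_lt.2 h2)
    rcases lt_trichotomy (Lfun d σ δ) (Rfun d σ δ) with h | h | h
    · apply key (-1) 0
      have h1 := aux_pos (dLf (-1) 0) (by
        rw [mul_zero, add_zero]; exact add_pos_of_pos_of_nonneg (div_pos (by linarith) hA) (by simp))
      have h2 := (dRf (-1) 0).continuousAt.eventually (lt_mem_nhds (a := Lfun d σ δ) (by simpa using h))
      filter_upwards [h1, h2.filter_mono nhdsWithin_le_nhds] with t t1 t2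
      simp only [zero_mul, add_zero] at t1
      exact (min_le_left _ _).trans_lt (lt_min t1 t2)
    · have hE := hE h
      set A := 8 * (sin a * cos a)
      set B := 8 * (sin b * cos b)
      obtain ⟨w, hw⟩ : ∃ w, (2 * A - 2 * B - 16 * sin δ * cos δ) * w = 2 := ⟨2 / _, mul_div_cancel₀ _ hE⟩
      obtain ⟨v, hv⟩ : ∃ v, (4 * d * sin δ * sin σ) * v =
        ((4 * d * cos δ * cos σ) - 8 * sin δ * cos δ + 2 * A) * w - 1 := ⟨_ / _, mul_div_cancel₀ _ hk.ne'⟩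
      apply key v w
      have h1 := aux_pos (dLf v w) (by
        rw [div_add' _ _ _ hA.ne']; exact div_pos (by linarith) hA)
      have h2 := aux_pos (dRf v w) (by
        rw [div_sub' hB.ne']; exact div_pos (by linarith) hB)
      filter_upwards [h1, h2] with t t1 t2
      simp only [zero_mul, add_zero] at t1 t2
      exact lt_min ((min_le_left _ _).trans_lt t1) ((min_le_right _ _).trans_lt t2)
    · apply key 1 0
      have h1 := aux_pos (dRf 1 0) (by
        rw [mul_zero, add_zero, mul_zero, sub_zero]; exact div_pos (by linarith) hB)
      have h2 := (dLf 1 0).continuousAt.eventually (lt_mem_nhds (a := Rfun d σ δ) (by simpa using h))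
      filter_upwards [h1, h2.filter_mono nhdsWithin_le_nhds] with t t1 t2
      simp only [zero_mul, add_zero] at t1
      exact (min_le_right _ _).trans_lt (lt_min t2 t1)
  · intro hmin
    have key : ∀ v w : ℝ, ¬ ∀ᶠ t in 𝓝[>] (0:ℝ), Cfun d (σ + t * v) (δ + t * w) < Cfun d σ δ := by
      intro v w h
      obtain ⟨t, h1, h2⟩ := (h.and ((path v w).eventually hmin)).exists
      exact absurd h1 (not_lt.2 h2)
    rcases le_total (Lfun d σ δ) (Rfun d σ δ) with h | h
    · apply key 1 0
      have h1 := aux_pos (dLf 1 0).neg (by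
        rw [mul_zero, add_zero, mul_zero, add_zero, ← neg_div]; exact div_pos (by linarith) hA)
      filter_upwards [h1] with t t1
      simp only [Pi.neg_apply, zero_mul, add_zero] at t1
      have : Cfun d σ δ = Lfun d σ δ := min_eq_left h
      rw [this]
      exact (min_le_left _ _).trans_lt (by linarith)
    · apply key (-1) 0
      have h1 := aux_pos (dRf (-1) 0).neg (by
        rw [mul_zero, add_zero, mul_zero, sub_zero, ← neg_div]; exact div_pos (by linarith) hB)
      filter_upwards [h1] with t t1
      simp only [Pi.neg_apply, zero_mul, add_zero] at t1
      have : Cfun d σ δ = Rfun d σ δ := min_eq_right h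
      rw [this]
      exact (min_le_right _ _).trans_lt (by linarith)
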